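/- Let H be a discrete group acting by homeomorphisms on a compact metric space X with at least three points, such that the action is minimal and extremely proximal. Then the action is strongly proximal. -/

import Mathlib

open Filter MeasureTheory

/-!
A two-point set is a proper closed subset of `X`, and contracting it would be impossible if `X` were
finite. An infinite Hausdorff space contains infinitely many disjoint nonempty open sets, hence a
nonempty open set `U` of arbitrarily small measure. Contracting the proper closed set `Uᶜ` moves all
but a small part of the mass of `μ` into a small ball. By compactness the centres of such balls can
be taken to converge to a point `x`; then the maps `y ↦ g k • y` converge to `x` in measure, hence
in distribution.
-/

open scoped Topology BoundedContinuousFunction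

/-- Extreme proximality of an action: every nonempty proper closed set is contracted to a point by
some sequence of acting elements. The empty set is excluded because its Hausdorff distance to a
point is the junk value `0`. -/
def IsExtremelyProximal (H X : Type*) [PseudoMetricSpace X] [SMul H X] : Prop :=
  ∀ Y : Set X, IsClosed Y → Y.Nonempty → Y ≠ Set.univ →
    ∃ (g : ℕ → H) (x : X),
      Tendsto (fun k => Metric.hausdorffDist ((fun y => g k • y) '' Y) {x}) atTop (𝓝 0)

/-- Strong proximality of an action: every probability measure has translates converging weakly to
a point mass. Integrals against the pushforward of `μ` under `g k • ·` are written as integrals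
against `μ`. -/
def IsStronglyProximal (H X : Type*) [TopologicalSpace X] [MeasurableSpace X] [SMul H X] : Prop :=
  ∀ μ : Measure X, IsProbabilityMeasure μ →
    ∃ (g : ℕ → H) (x : X), ∀ f : X →ᵇ ℝ,
      Tendsto (fun k => ∫ y, f (g k • y) ∂μ) atTop (𝓝 (f x))

theorem subset_ball_of_hausdorffDist_singleton_lt {X : Type*} [PseudoMetricSpace X] {s : Set X}
    {x : X} {r : ℝ} (hs : Bornology.IsBounded s) (h : Metric.hausdorffDist s {x} < r) :
    s ⊆ Metric.ball x r := by
  intro y hy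
  have hfin : Metric.hausdorffEDist s {x} ≠ ⊤ :=
    Metric.hausdorffEDist_ne_top_of_nonempty_of_bounded ⟨y, hy⟩ (Set.singleton_nonempty x) hs
      Bornology.isBounded_singleton
  calc
    dist y x = Metric.infDist y {x} := Metric.infDist_singleton.symm
    _ ≤ Metric.hausdorffDist s {x} := Metric.infDist_le_hausdorffDist_of_mem hy hfin
    _ < r := h

theorem exists_isOpen_nonempty_compl_nonempty_measure_lt {X : Type*} [TopologicalSpace X]
    [T2Space X] [Infinite X] [MeasurableSpace X] [OpensMeasurableSpace X] (μ : Measure X)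
    [IsFiniteMeasure μ] {ε : ENNReal} (hε : 0 < ε) :
    ∃ U : Set X, IsOpen U ∧ U.Nonempty ∧ Uᶜ.Nonempty ∧ μ U < ε := by
  obtain ⟨U, hinf, hopen, hdisj⟩ := exists_seq_infinite_isOpen_pairwise_disjoint X
  have hsum : ∑' n, μ (U n) ≠ ⊤ := by
    rw [← measure_iUnion hdisj fun n => (hopen n).measurableSet]
    exact measure_ne_top _ _
  obtain ⟨n, hn⟩ :=
    ((ENNReal.tendsto_atTop_zero_of_tsum_ne_top hsum).eventually (gt_mem_nhds hε)).exists
  have hcompl : U (n + 1) ⊆ (U n)ᶜ := (hdisj n.succ_ne_self).subset_compl_right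
  exact ⟨U n, hopen n, (hinf n).nonempty, (hinf (n + 1)).nonempty.mono hcompl, hn⟩

section ConvergenceInMeasure

variable {ι Ω E : Type*} [MeasurableSpace Ω] {μ : Measure Ω} {l : Filter ι} {T : ι → Ω → E}

theorem tendstoInMeasure_const_of_tendsto_measure_le_dist [PseudoMetricSpace E] {c : ι → E} {x : E}
    {r : ι → ℝ} (hr : Tendsto r l (𝓝 0)) (hc : Tendsto c l (𝓝 x))
    (hT : Tendsto (fun i => μ {ω | r i ≤ dist (T i ω) (c i)}) l (𝓝 0)) :
    TendstoInMeasure μ T l fun _ => x := by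
  rw [tendstoInMeasure_iff_dist]
  intro δ hδ
  have hsmall : ∀ᶠ i in l, r i + dist (c i) x < δ := by
    have h := hr.add (tendsto_iff_dist_tendsto_zero.1 hc)
    rw [add_zero] at h
    exact h.eventually (gt_mem_nhds hδ)
  refine tendsto_of_tendsto_of_tendsto_of_le_of_le' tendsto_const_nhds hT
    (Eventually.of_forall fun _ => zero_le) ?_
  filter_upwards [hsmall] with i hi
  refine measure_mono fun ω (hω : δ ≤ dist (T i ω) x) => ?_
  change r i ≤ dist (T i ω) (c i)
  linarith [dist_triangle (T i ω) (c i) x]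

theorem tendsto_integral_comp_of_tendstoInMeasure [PseudoEMetricSpace E] [MeasurableSpace E]
    [BorelSpace E] [IsProbabilityMeasure μ] [l.IsCountablyGenerated] [l.NeBot] {Z : Ω → E}
    (hT : ∀ i, AEMeasurable (T i) μ) (h : TendstoInMeasure μ T l Z) (f : E →ᵇ ℝ) :
    Tendsto (fun i => ∫ ω, f (T i ω) ∂μ) l (𝓝 (∫ ω, f (Z ω) ∂μ)) := by
  have hlaw := h.tendstoInDistribution hT
  have hint := ProbabilityMeasure.tendsto_iff_forall_integral_tendsto.1 hlaw.tendsto f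
  have hf (ν : Measure E) : AEStronglyMeasurable f ν := f.continuous.aestronglyMeasurable
  simpa only [ProbabilityMeasure.coe_mk, integral_map (hT _) (hf _),
    integral_map hlaw.aemeasurable_limit (hf _)] using hint

end ConvergenceInMeasure

namespace IsExtremelyProximal

variable {H X : Type*} [SMul H X]

theorem exists_mapsTo_ball [PseudoMetricSpace X] [BoundedSpace X] (h : IsExtremelyProximal H X)
    {Y : Set X} (hY : IsClosed Y) (hne : Y.Nonempty) (huniv : Y ≠ Set.univ) {r : ℝ} (hr : 0 < r) :
    ∃ (a : H) (c : X), Set.MapsTo (a • ·) Y (Metric.ball c r) := by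
  obtain ⟨g, c, hg⟩ := h Y hY hne huniv
  obtain ⟨k, hk⟩ := (hg.eventually (gt_mem_nhds hr)).exists
  exact ⟨g k, c, Set.mapsTo_iff_image_subset.2 <|
    subset_ball_of_hausdorffDist_singleton_lt (Bornology.IsBounded.all _) hk⟩

theorem infinite [MetricSpace X] [BoundedSpace X] [IsLeftCancelSMul H X]
    (h : IsExtremelyProximal H X) (hcard : ∃ x y z : X, x ≠ y ∧ x ≠ z ∧ y ≠ z) : Infinite X := by
  by_contra hfin
  rw [not_infinite_iff_finite] at hfin
  obtain ⟨x, y, z, hxy, hxz, hyz⟩ := hcard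
  have hproper : ({x, y} : Set X) ≠ Set.univ :=
    (Set.ne_univ_iff_exists_notMem _).2 ⟨z, by simp [hxz.symm, hyz.symm]⟩
  have hr : 0 < (Set.univ : Set X).infsep :=
    Set.finite_univ.infsep_pos_iff_nontrivial.2 ⟨x, Set.mem_univ x, y, Set.mem_univ y, hxy⟩
  have hsep {p c : X} (hp : p ∈ Metric.ball c (Set.univ : Set X).infsep) : p = c := by
    by_contra hpc
    exact hp.not_ge (Set.infsep_le_dist_of_mem (Set.mem_univ p) (Set.mem_univ c) hpc)
  obtain ⟨a, c, hac⟩ :=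
    h.exists_mapsTo_ball (Set.toFinite {x, y}).isClosed (Set.insert_nonempty x _) hproper hr
  have hx : a • x = c := hsep (hac (by simp))
  have hy : a • y = c := hsep (hac (by simp))
  exact hxy (IsLeftCancelSMul.left_cancel a x y (hx.trans hy.symm))

variable [MetricSpace X] [Infinite X] [MeasurableSpace X]

theorem exists_measure_le_dist_smul_lt [BoundedSpace X] [OpensMeasurableSpace X]
    (h : IsExtremelyProximal H X) (μ : Measure X) [IsFiniteMeasure μ] {r : ℝ} (hr : 0 < r)
    {ε : ENNReal} (hε : 0 < ε) : ∃ (a : H) (c : X), μ {y | r ≤ dist (a • y) c} < ε := by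
  obtain ⟨U, hU, hne, hcne, hμU⟩ := exists_isOpen_nonempty_compl_nonempty_measure_lt μ hε
  have hproper : Uᶜ ≠ Set.univ := Set.compl_ne_univ.2 hne
  obtain ⟨a, c, hac⟩ := h.exists_mapsTo_ball hU.isClosed_compl hcne hproper hr
  have hsub : {y | r ≤ dist (a • y) c} ⊆ U := fun y hy => by
    by_contra hyU
    exact (Metric.mem_ball.1 (hac hyU)).not_ge hy
  exact ⟨a, c, (measure_mono hsub).trans_lt hμU⟩

theorem exists_tendstoInMeasure_smul_const [CompactSpace X] [OpensMeasurableSpace X]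
    (h : IsExtremelyProximal H X) (μ : Measure X) [IsFiniteMeasure μ] :
    ∃ (g : ℕ → H) (x : X), TendstoInMeasure μ (fun k y => g k • y) atTop fun _ => x := by
  have hconc (n : ℕ) :
      ∃ (a : H) (c : X), μ {y | 1 / ((n : ℝ) + 1) ≤ dist (a • y) c} < (n : ENNReal)⁻¹ :=
    h.exists_measure_le_dist_smul_lt μ (by positivity)
      (ENNReal.inv_pos.2 (ENNReal.natCast_ne_top n))
  choose a c hac using hconc
  obtain ⟨x, φ, hφ, hx⟩ := CompactSpace.tendsto_subseq c
  have hμ : Tendsto (fun n : ℕ => μ {y | 1 / ((n : ℝ) + 1) ≤ dist (a n • y) (c n)}) atTop (𝓝 0) :=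
    tendsto_of_tendsto_of_tendsto_of_le_of_le tendsto_const_nhds
      ENNReal.tendsto_inv_nat_nhds_zero (fun _ => zero_le) fun n => (hac n).le
  exact ⟨a ∘ φ, x, tendstoInMeasure_const_of_tendsto_measure_le_dist
    (tendsto_one_div_add_atTop_nhds_zero_nat.comp hφ.tendsto_atTop) hx
    (hμ.comp hφ.tendsto_atTop)⟩

theorem isStronglyProximal [CompactSpace X] [BorelSpace X] [MeasurableConstSMul H X]
    (h : IsExtremelyProximal H X) : IsStronglyProximal H X := by
  intro μ hμ
  obtain ⟨g, x, hg⟩ := h.exists_tendstoInMeasure_smul_const μ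
  refine ⟨g, x, fun f => ?_⟩
  have hmeas (k : ℕ) : AEMeasurable (fun y => g k • y) μ :=
    (measurable_const_smul (g k)).aemeasurable
  simpa using tendsto_integral_comp_of_tendstoInMeasure hmeas hg f

end IsExtremelyProximal

theorem stronglyProximal_of_extremely_proximal_general {H X : Type*} [MetricSpace X]
    [CompactSpace X] [MeasurableSpace X] [BorelSpace X] [SMul H X] [IsLeftCancelSMul H X]
    [MeasurableConstSMul H X] (hcard : ∃ x y z : X, x ≠ y ∧ x ≠ z ∧ y ≠ z)
    (hext : IsExtremelyProximal H X) : IsStronglyProximal H X :=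
  have := hext.infinite hcard
  hext.isStronglyProximal

/-- If a group `H` acts by homeomorphisms on a compact metric space `X` with at
least three points, and the action is minimal and extremely proximal, then the
action is strongly proximal: every Borel probability measure on `X` can be
pushed by a sequence of group elements to converge weak* to a point mass. -/
theorem stronglyProximal_of_extremely_proximal
    {H X : Type*} [Group H] [MetricSpace X] [CompactSpace X]
    [MeasurableSpace X] [BorelSpace X] [MulAction H X]
    (hcont : ∀ g : H, Continuous fun x : X => g • x)
    (hcard : ∃ x y z : X, x ≠ y ∧ x ≠ z ∧ y ≠ z)
    (hmin : ∀ x : X, Dense (MulAction.orbit H x))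
    (hext : ∀ Y : Set X, IsClosed Y → Y.Nonempty → Y ≠ Set.univ →
      ∃ (g : ℕ → H) (x : X),
        Tendsto (fun k => Metric.hausdorffDist ((fun y => g k • y) '' Y) {x})
          atTop (nhds 0)) :
    ∀ μ : Measure X, IsProbabilityMeasure μ →
      ∃ (g : ℕ → H) (x : X), ∀ f : BoundedContinuousFunction X ℝ,
        Tendsto (fun k => ∫ y, f (g k • y) ∂μ) atTop (nhds (f x)) := by
  have : MeasurableConstSMul H X := ⟨fun g => (hcont g).measurable⟩
  exact stronglyProximal_of_extremely_proximal_general hcard hext
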